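/- Let Ω₁, Ω₂, a₁, a₂, a₃ ∈ ℝ and I = (I₁, I₂) ∈ ℝ². Set ω₁ := Ω₁ I₁, ω₂ := Ω₂ I₂, ω₃ := ω₁ + ω₂ − 1, and assume ω₁ ≠ 0, ω₂ ≠ 0, ω₃ ≠ 0. Let p₀(t) := 2/cosh t and g(φ₁, φ₂, t) := a₁ cos φ₁ + a₂ cos φ₂ + a₃ cos(φ₁ + φ₂ − t). Then for all τ ∈ ℝ and all (φ₁, φ₂, s) ∈ ℝ³, the improper integral (1/2) ∫_{−∞}^{∞} p₀(τ+σ)² · g(φ₁ + ω₁σ, φ₂ + ω₂σ, s + σ) dσ converges and equals Σ_{i=1}^{3} A_i cos(φ_i − ω_i τ), where φ₃ := φ₁ + φ₂ − s and A_i := 2π ω_i a_i / sinh(π ω_i / 2) for i = 1, 2, 3. -/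

import Mathlib

open MeasureTheory Real

/-
Up to the substitution `x = sigmoid (2 * t) = exp t / (2 * cosh t)`, the two-sided Laplace transform
of a power of `1 / cosh` is a Beta integral. For the square this is `B (1 + z / 2, 1 - z / 2)`,
which Euler's reflection formula evaluates in terms of the sine; imaginary `z = ω * I` gives the
Fourier transform of `1 / cosh ^ 2`. Each harmonic of `g` contributes one value of that transform,
and moving time by `τ` along the separatrix only shifts its phase by `-ω * τ`.
-/

section Sigmoid

variable {E : Type*} [NormedAddCommGroup E] [NormedSpace ℝ E]

theorem integrableOn_Ioo_zero_one_iff_integrable_sigmoid (g : ℝ → E) :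
    IntegrableOn g (Set.Ioo 0 1) ↔
      Integrable fun t : ℝ => (sigmoid t * sigmoid (-t)) • g (sigmoid t) := by
  rw [← range_sigmoid, ← Set.image_univ, integrableOn_image_iff_integrableOn_abs_deriv_smul
    .univ (fun t _ => (hasDerivAt_sigmoid t).hasDerivWithinAt) sigmoid_injective.injOn,
    integrableOn_univ]
  simp only [← sigmoid_neg, abs_of_pos (mul_pos (sigmoid_pos _) (sigmoid_pos _))]

theorem integral_Ioo_zero_one_eq_integral_sigmoid (g : ℝ → E) :
    ∫ x in Set.Ioo 0 1, g x = ∫ t : ℝ, (sigmoid t * sigmoid (-t)) • g (sigmoid t) := by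
  rw [← range_sigmoid, ← Set.image_univ, integral_image_eq_integral_abs_deriv_smul
    .univ (fun t _ => (hasDerivAt_sigmoid t).hasDerivWithinAt) sigmoid_injective.injOn,
    setIntegral_univ]
  simp only [← sigmoid_neg, abs_of_pos (mul_pos (sigmoid_pos _) (sigmoid_pos _))]

end Sigmoid

theorem sigmoid_two_mul (t : ℝ) : sigmoid (2 * t) = exp t / (2 * cosh t) := by
  have h : exp (-(2 * t)) = exp (-t) / exp t := by rw [← exp_sub]; ring_nf
  rw [sigmoid_def, h, cosh_eq]
  field_simp

theorem sigmoid_smul_beta_integrand (u v : ℂ) (t : ℝ) :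
    (sigmoid t * sigmoid (-t)) • ((sigmoid t : ℂ) ^ (u - 1) * (1 - (sigmoid t : ℂ)) ^ (v - 1)) =
      (sigmoid t : ℂ) ^ u * (sigmoid (-t) : ℂ) ^ v := by
  have h₁ : (sigmoid t : ℂ) ≠ 0 := mod_cast (sigmoid_pos t).ne'
  have h₂ : (sigmoid (-t) : ℂ) ≠ 0 := mod_cast (sigmoid_pos (-t)).ne'
  rw [show 1 - (sigmoid t : ℂ) = sigmoid (-t) by simp [sigmoid_neg], Complex.cpow_sub _ _ h₁,
    Complex.cpow_sub _ _ h₂, Complex.cpow_one, Complex.cpow_one, Complex.real_smul,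
    Complex.ofReal_mul]
  field_simp

theorem integrable_sigmoid_cpow_mul_sigmoid_neg_cpow {u v : ℂ} (hu : 0 < u.re) (hv : 0 < v.re) :
    Integrable fun t : ℝ => (sigmoid t : ℂ) ^ u * (sigmoid (-t) : ℂ) ^ v := by
  have h := Complex.betaIntegral_convergent hu hv
  rw [intervalIntegrable_iff_integrableOn_Ioo_of_le zero_le_one,
    integrableOn_Ioo_zero_one_iff_integrable_sigmoid] at h
  simpa only [sigmoid_smul_beta_integrand] using h

theorem integral_sigmoid_cpow_mul_sigmoid_neg_cpow (u v : ℂ) :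
    ∫ t : ℝ, (sigmoid t : ℂ) ^ u * (sigmoid (-t) : ℂ) ^ v = Complex.betaIntegral u v := by
  rw [Complex.betaIntegral, intervalIntegral.integral_of_le zero_le_one,
    integral_Ioc_eq_integral_Ioo, integral_Ioo_zero_one_eq_integral_sigmoid]
  simp only [sigmoid_smul_beta_integrand]

theorem betaIntegral_one_add_one_sub {z : ℂ} (hz : z ≠ 0) (hre : |z.re| < 1) :
    Complex.betaIntegral (1 + z) (1 - z) = π * z / Complex.sin (π * z) := by
  obtain ⟨hlo, hhi⟩ := abs_lt.1 hre
  have Gamma_two : Complex.Gamma 2 = 1 := by simp [Complex.Gamma_ofNat_eq_factorial]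
  rw [Complex.betaIntegral_eq_Gamma_mul_div _ _ (by simp; linarith) (by simpa using hhi),
    add_add_sub_cancel, one_add_one_eq_two, Gamma_two, div_one, add_comm,
    Complex.Gamma_add_one z hz, mul_assoc, Complex.Gamma_mul_Gamma_one_sub]
  ring

theorem sigmoid_two_mul_cpow_mul_cpow (z w : ℂ) (t : ℝ) :
    (sigmoid (2 * t) : ℂ) ^ ((w + z) / 2) * (sigmoid (-(2 * t)) : ℂ) ^ ((w - z) / 2) =
      Complex.exp (z * t) / ((2 * cosh t : ℝ) : ℂ) ^ w := by
  have hc : 0 < 2 * cosh t := by have := cosh_pos t; positivity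
  have hc' : ((2 * cosh t : ℝ) : ℂ) ≠ 0 := mod_cast hc.ne'
  have exp_cpow (x : ℝ) (y : ℂ) : (exp x : ℂ) ^ y = Complex.exp (x * y) := by
    rw [Complex.cpow_def_of_ne_zero (mod_cast (exp_pos x).ne'), ← Complex.ofReal_log (exp_pos x).le,
      log_exp]
  rw [← mul_neg, sigmoid_two_mul, sigmoid_two_mul, cosh_neg, Complex.ofReal_div, Complex.ofReal_div,
    Complex.div_cpow_ofReal_nonneg (exp_pos _).le hc.le,
    Complex.div_cpow_ofReal_nonneg (exp_pos _).le hc.le, div_mul_div_comm, exp_cpow, exp_cpow,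
    ← Complex.exp_add, ← Complex.cpow_add _ _ hc']
  push_cast
  ring_nf

theorem integrable_cexp_div_two_mul_cosh_cpow {z w : ℂ} (h : |z.re| < w.re) :
    Integrable fun t : ℝ => Complex.exp (z * t) / ((2 * cosh t : ℝ) : ℂ) ^ w := by
  obtain ⟨hlo, hhi⟩ := abs_lt.1 h
  simpa only [sigmoid_two_mul_cpow_mul_cpow] using
    (integrable_sigmoid_cpow_mul_sigmoid_neg_cpow (u := (w + z) / 2) (v := (w - z) / 2)
      (by simp; linarith) (by simp; linarith)).comp_mul_left' two_ne_zero

theorem integral_cexp_div_two_mul_cosh_cpow (z w : ℂ) :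
    ∫ t : ℝ, Complex.exp (z * t) / ((2 * cosh t : ℝ) : ℂ) ^ w =
      Complex.betaIntegral ((w + z) / 2) ((w - z) / 2) / 2 := by
  simp only [← sigmoid_two_mul_cpow_mul_cpow]
  rw [Measure.integral_comp_mul_left
    (fun x : ℝ => (sigmoid x : ℂ) ^ ((w + z) / 2) * (sigmoid (-x) : ℂ) ^ ((w - z) / 2)),
    integral_sigmoid_cpow_mul_sigmoid_neg_cpow, abs_of_pos (by norm_num), Complex.real_smul]
  push_cast
  ring

theorem cexp_div_cosh_sq (z : ℂ) (t : ℝ) :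
    Complex.exp (z * t) / (cosh t : ℂ) ^ 2 =
      4 * (Complex.exp (z * t) / ((2 * cosh t : ℝ) : ℂ) ^ (2 : ℂ)) := by
  rw [Complex.cpow_ofNat, Complex.ofReal_mul, mul_pow]
  push_cast
  ring

theorem integrable_cexp_div_cosh_sq {z : ℂ} (hre : |z.re| < 2) :
    Integrable fun t : ℝ => Complex.exp (z * t) / (cosh t : ℂ) ^ 2 := by
  simpa only [cexp_div_cosh_sq] using (integrable_cexp_div_two_mul_cosh_cpow hre).const_mul 4

theorem integral_cexp_div_cosh_sq {z : ℂ} (hz : z ≠ 0) (hre : |z.re| < 2) :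
    ∫ t : ℝ, Complex.exp (z * t) / (cosh t : ℂ) ^ 2 = π * z / Complex.sin (π * z / 2) := by
  have hre' : |(z / 2).re| < 1 := by
    rw [Complex.div_ofNat_re, abs_div, abs_two]
    linarith
  simp only [cexp_div_cosh_sq]
  rw [integral_const_mul, integral_cexp_div_two_mul_cosh_cpow,
    show (2 + z) / 2 = 1 + z / 2 by ring, show (2 - z) / 2 = 1 - z / 2 by ring,
    betaIntegral_one_add_one_sub (div_ne_zero hz two_ne_zero) hre', mul_div_assoc (π : ℂ) z 2]
  ring

theorem integral_cexp_mul_I_div_cosh_sq {ω : ℝ} (hω : ω ≠ 0) :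
    ∫ t : ℝ, Complex.exp (ω * Complex.I * t) / (cosh t : ℂ) ^ 2 =
      ((π * ω / sinh (π * ω / 2) : ℝ) : ℂ) := by
  rw [integral_cexp_div_cosh_sq (by simp [hω]) (by simp), ← mul_assoc,
    mul_div_right_comm _ Complex.I 2, Complex.sin_mul_I, mul_div_mul_right _ _ Complex.I_ne_zero]
  push_cast
  rfl

theorem re_cexp_mul_cexp_div_cosh_sq (ω φ t : ℝ) :
    (Complex.exp (φ * Complex.I) *
      (Complex.exp (ω * Complex.I * t) / (cosh t : ℂ) ^ 2)).re = cos (φ + ω * t) / cosh t ^ 2 := by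
  rw [← mul_div_assoc, ← Complex.exp_add, ← Complex.ofReal_pow, Complex.div_ofReal_re,
    show (φ * Complex.I + ω * Complex.I * t : ℂ) = (φ + ω * t : ℝ) * Complex.I by push_cast; ring,
    Complex.exp_ofReal_mul_I_re]

theorem integrable_cos_div_cosh_sq (ω φ : ℝ) :
    Integrable fun t : ℝ => cos (φ + ω * t) / cosh t ^ 2 := by
  have h := ((integrable_cexp_div_cosh_sq (z := ω * Complex.I) (by simp)).const_mul
    (Complex.exp (φ * Complex.I))).re
  simpa only [RCLike.re_eq_complex_re, re_cexp_mul_cexp_div_cosh_sq] using h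

theorem integral_cos_div_cosh_sq {ω : ℝ} (hω : ω ≠ 0) (φ : ℝ) :
    ∫ t : ℝ, cos (φ + ω * t) / cosh t ^ 2 = π * ω / sinh (π * ω / 2) * cos φ := by
  have h := integral_re ((integrable_cexp_div_cosh_sq (z := ω * Complex.I) (by simp)).const_mul
    (Complex.exp (φ * Complex.I)))
  simp only [RCLike.re_eq_complex_re, re_cexp_mul_cexp_div_cosh_sq] at h
  rw [h, integral_const_mul, integral_cexp_mul_I_div_cosh_sq hω, Complex.re_mul_ofReal,
    Complex.exp_ofReal_mul_I_re, mul_comm]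

theorem separatrix_mul_harmonic (τ ω a φ σ : ℝ) :
    1 / 2 * (2 / cosh (τ + σ)) ^ 2 * (a * cos (φ + ω * σ)) =
      2 * a * (cos (φ - ω * τ + ω * (τ + σ)) / cosh (τ + σ) ^ 2) := by
  rw [show φ - ω * τ + ω * (τ + σ) = φ + ω * σ by ring]
  ring

theorem integrable_separatrix_mul_harmonic (τ ω a φ : ℝ) :
    Integrable fun σ : ℝ => 1 / 2 * (2 / cosh (τ + σ)) ^ 2 * (a * cos (φ + ω * σ)) := by
  simpa only [separatrix_mul_harmonic] using
    ((integrable_cos_div_cosh_sq ω (φ - ω * τ)).comp_add_left τ).const_mul (2 * a)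

theorem integral_separatrix_mul_harmonic {ω : ℝ} (hω : ω ≠ 0) (τ a φ : ℝ) :
    ∫ σ : ℝ, 1 / 2 * (2 / cosh (τ + σ)) ^ 2 * (a * cos (φ + ω * σ)) =
      2 * π * ω * a / sinh (π * ω / 2) * cos (φ - ω * τ) := by
  simp only [separatrix_mul_harmonic]
  rw [integral_const_mul,
    integral_add_left_eq_self (fun t => cos (φ - ω * τ + ω * t) / cosh t ^ 2),
    integral_cos_div_cosh_sq hω]
  ring

/-- the Melnikov (Poincaré) potential of the example Hamiltonian,
computed along the pendulum separatrix `p₀(t) = 2/cosh t`. -/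
theorem stmt15 (Ω₁ Ω₂ a₁ a₂ a₃ I₁ I₂ : ℝ)
    (ω₁ ω₂ ω₃ : ℝ) (hω₁ : ω₁ = Ω₁ * I₁) (hω₂ : ω₂ = Ω₂ * I₂)
    (hω₃ : ω₃ = ω₁ + ω₂ - 1)
    (h1 : ω₁ ≠ 0) (h2 : ω₂ ≠ 0) (h3 : ω₃ ≠ 0)
    (τ φ₁ φ₂ s : ℝ) :
    Integrable (fun σ : ℝ =>
      (1 / 2) * (2 / Real.cosh (τ + σ)) ^ 2 *
        (a₁ * Real.cos (φ₁ + ω₁ * σ) + a₂ * Real.cos (φ₂ + ω₂ * σ)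
          + a₃ * Real.cos ((φ₁ + ω₁ * σ) + (φ₂ + ω₂ * σ) - (s + σ)))) ∧
    ∫ σ : ℝ, (1 / 2) * (2 / Real.cosh (τ + σ)) ^ 2 *
        (a₁ * Real.cos (φ₁ + ω₁ * σ) + a₂ * Real.cos (φ₂ + ω₂ * σ)
          + a₃ * Real.cos ((φ₁ + ω₁ * σ) + (φ₂ + ω₂ * σ) - (s + σ)))
      = (2 * π * ω₁ * a₁ / Real.sinh (π * ω₁ / 2)) * Real.cos (φ₁ - ω₁ * τ)
        + (2 * π * ω₂ * a₂ / Real.sinh (π * ω₂ / 2)) * Real.cos (φ₂ - ω₂ * τ)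
        + (2 * π * ω₃ * a₃ / Real.sinh (π * ω₃ / 2)) * Real.cos ((φ₁ + φ₂ - s) - ω₃ * τ) := by
  have third_phase (σ : ℝ) :
      (φ₁ + ω₁ * σ) + (φ₂ + ω₂ * σ) - (s + σ) = (φ₁ + φ₂ - s) + ω₃ * σ := by
    rw [hω₃]
    ring
  have i₁ := integrable_separatrix_mul_harmonic τ ω₁ a₁ φ₁
  have i₂ := integrable_separatrix_mul_harmonic τ ω₂ a₂ φ₂
  have i₃ := integrable_separatrix_mul_harmonic τ ω₃ a₃ (φ₁ + φ₂ - s)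
  simp only [third_phase, mul_add]
  have i₁₂ := i₁.fun_add i₂
  refine ⟨i₁₂.add i₃, ?_⟩
  rw [integral_add i₁₂ i₃, integral_add i₁ i₂, integral_separatrix_mul_harmonic h1,
    integral_separatrix_mul_harmonic h2, integral_separatrix_mul_harmonic h3]
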